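/- arXiv:0712.2337 — 4 statements merged into one kernel-verified Lean document; each statement's English description precedes it below -/
import Mathlib

section
/- For any non-empty word ω = (ω₁,…,ω_r) with letters in 𝒩, if β_ω ≠ 0 then ‖ω‖ ≥ −1, the partial sums satisfy ω₁+…+ω_i ≥ 0 for every 1 ≤ i ≤ r−1, and the tail sums satisfy ω_i+…+ω_r ≤ ‖ω‖ for every 1 ≤ i ≤ r. -/
/-!
Statement 2.  Let `𝒩 = {n ∈ ℤ : n ≥ −1}`.  For a non-empty word `ω = (ω₁,…,ω_r)` of
elements of `𝒩` set `‖ω‖ = ω₁+…+ω_r` and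
`β_ω = 1` if `r = 1`, `β_ω = (ω₁+1)(ω₁+ω₂+1)⋯(ω₁+…+ω_{r−1}+1)` if `r ≥ 2`.
If `β_ω ≠ 0` then `‖ω‖ ≥ −1`, all partial sums `ω₁+…+ω_i` (`1 ≤ i ≤ r−1`) are `≥ 0`,
and all tail sums `ω_i+…+ω_r` (`1 ≤ i ≤ r`) are `≤ ‖ω‖`.
-/

/-- `β_ω = ∏_{i=1}^{r-1} (ω₁+…+ω_i + 1)`; the empty product (case `r = 1`) is `1`. -/
def betaCoeff (ω : List ℤ) : ℤ :=
  ∏ i ∈ Finset.range (ω.length - 1), ((ω.take (i + 1)).sum + 1)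

theorem sum_take_nonneg_of_betaCoeff_ne_zero {ω : List ℤ} (hΩ : ∀ x ∈ ω, (-1 : ℤ) ≤ x)
    (hβ : betaCoeff ω ≠ 0) (i : ℕ) (hi : i ≤ ω.length - 1) : 0 ≤ (ω.take i).sum := by
  induction i with
  | zero => simp
  | succ k ih =>
    have hk : k < ω.length := by omega
    have hprev := ih (by omega)
    have hfactor := Finset.prod_ne_zero_iff.mp hβ k (Finset.mem_range.mpr (by omega))
    have hletter := hΩ _ (List.getElem_mem hk)
    rw [List.sum_take_succ _ _ hk] at hfactor ⊢
    omega

theorem stmt_2 (ω : List ℤ) (hne : ω ≠ []) (hΩ : ∀ x ∈ ω, (-1 : ℤ) ≤ x)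
    (hβ : betaCoeff ω ≠ 0) :
    (-1 : ℤ) ≤ ω.sum ∧
    (∀ i : ℕ, 1 ≤ i → i ≤ ω.length - 1 → (0 : ℤ) ≤ (ω.take i).sum) ∧
    (∀ i : ℕ, 1 ≤ i → i ≤ ω.length → (ω.drop (i - 1)).sum ≤ ω.sum) := by
  have hnonneg := sum_take_nonneg_of_betaCoeff_ne_zero hΩ hβ
  refine ⟨?_, fun i _ hi => hnonneg i hi, fun i hi hir => ?_⟩
  · have hlast := hΩ _ (List.getLast_mem hne)
    have hinit := hnonneg (ω.length - 1) le_rfl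
    rw [← List.dropLast_eq_take] at hinit
    have hsplit := congrArg List.sum (List.dropLast_append_getLast hne)
    rw [List.sum_append, List.sum_singleton] at hsplit
    omega
  · have hinit := hnonneg (i - 1) (by omega)
    have hsplit := List.sum_take_add_sum_drop ω (i - 1)
    omega
end

section
/- The map τ from moulds to dimoulds, defined by τ(M)^{(α,β)} = Σ_ω sh(α,β;ω) M^ω, is an A-algebra homomorphism: it is A-linear, τ(1^•) = 1^{••}, and τ(M × N) = τ(M) × τ(N) for all moulds M, N. -/
/-! Statement 6: the map τ from moulds to dimoulds is an A-algebra homomorphism. -/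

open scoped Classical

/-- Shuffle coefficient `sh(α, β; ω)`: the number of ways of obtaining `ω` by
interdigitating the letters of `α` and those of `β` while preserving their internal order. -/
noncomputable def sh {Ω : Type*} : List Ω → List Ω → List Ω → ℕ
  | [], [], [] => 1
  | _ :: _, _, [] => 0
  | [], _ :: _, [] => 0
  | [], [], _ :: _ => 0
  | [], b :: β, c :: ω => if b = c then sh [] β ω else 0
  | a :: α, [], c :: ω => if a = c then sh α [] ω else 0
  | a :: α, b :: β, c :: ω =>
      (if a = c then sh α (b :: β) ω else 0) +
      (if b = c then sh (a :: α) β ω else 0)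

/-- Mould multiplication `(M × N)^ω = Σ_{ω = ω¹·ω²} M^{ω¹} N^{ω²}`. -/
noncomputable def mmul {Ω A : Type*} [CommRing A] (M N : List Ω → A) : List Ω → A := fun ω =>
  ∑ i ∈ Finset.range (ω.length + 1), M (ω.take i) * N (ω.drop i)

/-- The unit mould `1^•`. -/
def munit {Ω A : Type*} [CommRing A] : List Ω → A := fun ω => match ω with | [] => 1 | _ => 0

/-- `Σ_ω sh(α,β;ω) M^ω`, realized as a finite sum over the permutations of `α ++ β`
(the shuffle coefficient vanishes on any word which is not a permutation of `α ++ β`). -/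
noncomputable def shSum {Ω A : Type*} [CommRing A] (M : List Ω → A) (α β : List Ω) : A :=
  ∑ ω ∈ (α ++ β).permutations.toFinset, sh α β ω • M ω

/-- A mould is alternal if `M^∅ = 0` and all the shuffle sums vanish. -/
def IsAlternal {Ω A : Type*} [CommRing A] (M : List Ω → A) : Prop :=
  M [] = 0 ∧ ∀ α β : List Ω, α ≠ [] → β ≠ [] → shSum M α β = 0

/-- A mould is symmetral if `M^∅ = 1` and the shuffle sums reproduce the products. -/
def IsSymmetral {Ω A : Type*} [CommRing A] (M : List Ω → A) : Prop :=
  M [] = 1 ∧ ∀ α β : List Ω, α ≠ [] → β ≠ [] → shSum M α β = M α * M β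

/-- Dimould multiplication. -/
noncomputable def dmul {Ω A : Type*} [CommRing A] (M N : List Ω → List Ω → A) :
    List Ω → List Ω → A := fun ω η =>
  ∑ i ∈ Finset.range (ω.length + 1), ∑ j ∈ Finset.range (η.length + 1),
    M (ω.take i) (η.take j) * N (ω.drop i) (η.drop j)

/-- The unit dimould `1^{••}`. -/
def dunit {Ω A : Type*} [CommRing A] : List Ω → List Ω → A := fun ω η =>
  match ω, η with | [], [] => 1 | _, _ => 0

/-- The map `τ` from moulds to dimoulds, `τ(M)^{(α,β)} = Σ_ω sh(α,β;ω) M^ω`. -/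
noncomputable def tau {Ω A : Type*} [CommRing A] (M : List Ω → A) : List Ω → List Ω → A :=
  fun α β => shSum M α β

/-- The list of shuffles of two words, each listed with its multiplicity. -/
def shuffles {Ω : Type*} : List Ω → List Ω → List (List Ω)
  | [], β => [β]
  | a :: α, [] => [a :: α]
  | a :: α, b :: β =>
      (shuffles α (b :: β)).map (List.cons a) ++ (shuffles (a :: α) β).map (List.cons b)

theorem shuffles_nil_right {Ω : Type*} (α : List Ω) : shuffles α [] = [α] := by
  cases α <;> simp [shuffles]

theorem count_map_cons {Ω : Type*} (a c : Ω) (ω : List Ω) (L : List (List Ω)) :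
    (L.map (List.cons a)).count (c :: ω) = if a = c then L.count ω else 0 := by
  split_ifs with h
  · subst h
    exact List.count_map_of_injective L _ (List.cons_injective) ω
  · refine List.count_eq_zero.2 ?_
    simp [h]

theorem count_map_cons_nil {Ω : Type*} (a : Ω) (L : List (List Ω)) :
    (L.map (List.cons a)).count [] = 0 :=
  List.count_eq_zero.2 (by simp)

theorem sh_eq_count {Ω : Type*} (α β ω : List Ω) : sh α β ω = (shuffles α β).count ω := by
  induction α, β, ω using sh.induct with
  | case2 a α β => cases β <;> simp [sh, shuffles, count_map_cons_nil]
  | _ => simp_all [sh, shuffles, shuffles_nil_right, count_map_cons, List.count_singleton]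

theorem perm_append_of_mem_shuffles {Ω : Type*} (α β : List Ω) :
    ∀ ω ∈ shuffles α β, ω.Perm (α ++ β) := by
  induction α, β using shuffles.induct with
  | case1 β => simp [shuffles]
  | case2 a α => simp [shuffles]
  | case3 a α b β ih₁ ih₂ =>
    intro ω hω
    simp only [shuffles, List.mem_append, List.mem_map] at hω
    rcases hω with ⟨η, hη, rfl⟩ | ⟨η, hη, rfl⟩
    · exact (ih₁ η hη).cons a
    · exact ((ih₂ η hη).cons b).trans List.perm_middle.symm

theorem tau_eq_sum_shuffles {Ω A : Type*} [CommRing A] (M : List Ω → A) (α β : List Ω) :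
    tau M α β = ((shuffles α β).map M).sum := by
  rw [Finset.sum_list_map_count]
  simp only [tau, shSum, sh_eq_count]
  symm
  convert Finset.sum_subset (s₁ := (shuffles α β).toFinset)
    (s₂ := (α ++ β).permutations.toFinset) (f := fun ω => (shuffles α β).count ω • M ω) ?_ ?_
  · intro ω hω
    simpa using perm_append_of_mem_shuffles α β ω (by simpa using hω)
  · intro ω _ hω
    rw [List.count_eq_zero.2 (by simpa using hω), zero_smul]

theorem tau_add {Ω A : Type*} [CommRing A] (M N : List Ω → A) :
    tau (M + N) = tau M + tau N := by
  funext α β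
  simp [tau, shSum, Finset.sum_add_distrib]

theorem tau_smul {Ω A : Type*} [CommRing A] (c : A) (M : List Ω → A) :
    tau (c • M) = c • tau M := by
  funext α β
  simp [tau, shSum, Finset.mul_sum, mul_left_comm]

theorem tau_nil_left {Ω A : Type*} [CommRing A] (M : List Ω → A) (β : List Ω) :
    tau M [] β = M β := by
  simp [tau_eq_sum_shuffles, shuffles]

theorem tau_nil_right {Ω A : Type*} [CommRing A] (M : List Ω → A) (α : List Ω) :
    tau M α [] = M α := by
  simp [tau_eq_sum_shuffles, shuffles_nil_right]

theorem tau_cons_cons {Ω A : Type*} [CommRing A] (M : List Ω → A) (a b : Ω) (α β : List Ω) :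
    tau M (a :: α) (b :: β) =
      tau (fun ω => M (a :: ω)) α (b :: β) + tau (fun ω => M (b :: ω)) (a :: α) β := by
  simp [tau_eq_sum_shuffles, shuffles, Function.comp_def]

theorem tau_munit {Ω A : Type*} [CommRing A] : tau (munit : List Ω → A) = dunit := by
  funext α β
  match α, β with
  | [], [] => simp [tau_nil_left, munit, dunit]
  | [], b :: β => simp [tau_nil_left, munit, dunit]
  | a :: α, [] => simp [tau_nil_right, munit, dunit]
  | a :: α, b :: β => simp [tau_eq_sum_shuffles, shuffles, munit, dunit, Function.comp_def]

theorem mmul_cons {Ω A : Type*} [CommRing A] (M N : List Ω → A) (a : Ω) :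
    (fun ω => mmul M N (a :: ω)) =
      mmul (fun ω => M (a :: ω)) N + M [] • fun ω => N (a :: ω) := by
  funext ω
  simp [mmul, Finset.sum_range_succ' _ (ω.length + 1)]

theorem tau_mmul {Ω A : Type*} [CommRing A] (M N : List Ω → A) (α β : List Ω) :
    tau (mmul M N) α β = dmul (tau M) (tau N) α β := by
  induction α, β using shuffles.induct generalizing M with
  | case1 β => simp [tau_nil_left, mmul, dmul]
  | case2 a α => simp [tau_nil_right, mmul, dmul]
  | case3 a α b β ih₁ ih₂ =>
    rw [tau_cons_cons, mmul_cons, mmul_cons, tau_add, tau_add, tau_smul, tau_smul]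
    simp only [Pi.add_apply, Pi.smul_apply, smul_eq_mul, ih₁, ih₂]
    simp only [dmul, List.length_cons, Finset.sum_range_succ' _ (α.length + 1),
      Finset.sum_range_succ' _ (β.length + 1), List.take_succ_cons, List.drop_succ_cons,
      List.take_zero, List.drop_zero, tau_nil_left, tau_nil_right, tau_cons_cons M,
      tau_cons_cons N a b α β, add_mul, Finset.sum_add_distrib]
    ring

theorem stmt_6 {Ω A : Type*} [Nonempty Ω] [CommRing A] [Algebra ℂ A] :
    (∀ M N : List Ω → A, tau (M + N) = tau M + tau N) ∧
    (∀ (c : A) (M : List Ω → A), tau (c • M) = c • tau M) ∧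
    tau (munit : List Ω → A) = dunit ∧
    (∀ M N : List Ω → A, tau (mmul M N) = dmul (tau M) (tau N)) := by
  exact ⟨tau_add, tau_smul, tau_munit, fun M N => by
    funext α β
    exact tau_mmul M N α β⟩
end

section
/- Suppose Ω is a commutative semigroup and U is an alternal mould. Then: (i) if M is alternal, M ∘ U is alternal; (ii) if M is symmetral, M ∘ U is symmetral; (iii) if moreover U^ω is invertible in A for every word ω of length 1 (so that U admits an inverse V for mould composition, V ∘ U = U ∘ V = I^•), then this composition inverse V is alternal, where I^• is the identity mould taking the value 1 on words of length 1 and 0 on all other words. -/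
/-! Statement 11: composition with an alternal mould preserves alternality and symmetrality, and the composition inverse of an alternal mould is alternal. -/

open scoped Classical

/-- The sum `‖ω‖` of a non-empty word, in the commutative semigroup `Ω`
(junk value on the empty word). -/
noncomputable def wsum {Ω : Type*} [AddCommSemigroup Ω] [Nonempty Ω] : List Ω → Ω
  | [] => Classical.arbitrary Ω
  | a :: l => l.foldl (· + ·) a

/-- Mould composition: `(M ∘ U)^ω = Σ M^{(‖ω¹‖,…,‖ω^s‖)} U^{ω¹}⋯U^{ω^s}`, the sum being
over all decompositions of `ω` into consecutive non-empty blocks `ω = ω¹·…·ω^s`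
(equivalently, over all compositions of `r(ω)`); for `ω = ∅` this gives `M^∅`. -/
noncomputable def mcomp {Ω A : Type*} [AddCommSemigroup Ω] [Nonempty Ω] [CommRing A]
    (M U : List Ω → A) : List Ω → A := fun ω =>
  ∑ c : Composition ω.length,
    M ((ω.splitWrtComposition c).map wsum) * ((ω.splitWrtComposition c).map U).prod

/-- The identity mould `I^•`. -/
def idMould {Ω A : Type*} [CommRing A] : List Ω → A := fun ω =>
  match ω with | [_] => 1 | _ => 0

namespace Mould

section Deconcatenation

variable {Ω A : Type*} [CommRing A]

/-- Sum of `F p q` over all decompositions `ω = p ++ q`. -/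
def decon (F : List Ω → List Ω → A) (ω : List Ω) : A :=
  ∑ i ∈ Finset.range (ω.length + 1), F (ω.take i) (ω.drop i)

/-- Sum of `F p q` over all decompositions `ω = p ++ q` with `p` non-empty. -/
def deconPos (F : List Ω → List Ω → A) (ω : List Ω) : A :=
  ∑ i ∈ Finset.range ω.length, F (ω.take (i + 1)) (ω.drop (i + 1))

lemma decon_eq (F : List Ω → List Ω → A) (ω : List Ω) :
    decon F ω = F [] ω + deconPos F ω := by
  simp [decon, deconPos, Finset.sum_range_succ', add_comm]

@[simp] lemma decon_nil (F : List Ω → List Ω → A) : decon F [] = F [] [] := by simp [decon]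

@[simp] lemma deconPos_nil (F : List Ω → List Ω → A) : deconPos F [] = 0 := by simp [deconPos]

lemma deconPos_cons (F : List Ω → List Ω → A) (a : Ω) (ω : List Ω) :
    deconPos F (a :: ω) = decon (fun p q => F (a :: p) q) ω := by
  simp [decon, deconPos]

lemma decon_cons (F : List Ω → List Ω → A) (a : Ω) (ω : List Ω) :
    decon F (a :: ω) = F [] (a :: ω) + decon (fun p q => F (a :: p) q) ω := by
  rw [decon_eq, deconPos_cons]

lemma decon_add (F G : List Ω → List Ω → A) (ω : List Ω) :
    decon (fun p q => F p q + G p q) ω = decon F ω + decon G ω :=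
  Finset.sum_add_distrib

lemma deconPos_add (F G : List Ω → List Ω → A) (ω : List Ω) :
    deconPos (fun p q => F p q + G p q) ω = deconPos F ω + deconPos G ω :=
  Finset.sum_add_distrib

lemma deconPos_mul_left (c : A) (F : List Ω → List Ω → A) (ω : List Ω) :
    deconPos (fun p q => c * F p q) ω = c * deconPos F ω :=
  (Finset.mul_sum _ _ _).symm

lemma deconPos_comm (F : List Ω → List Ω → List Ω → List Ω → A) (α β : List Ω) :
    deconPos (fun p q => deconPos (F p q) β) α =
      deconPos (fun r s => deconPos (fun p q => F p q r s) α) β :=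
  Finset.sum_comm

lemma deconPos_congr {F G : List Ω → List Ω → A} {ω : List Ω}
    (h : ∀ p q, p ≠ [] → p ++ q = ω → F p q = G p q) : deconPos F ω = deconPos G ω := by
  refine Finset.sum_congr rfl fun i hi => h _ _ ?_ (List.take_append_drop _ _)
  rw [Finset.mem_range] at hi
  rw [← List.length_pos_iff, List.length_take]
  omega

lemma decon_assoc (H : List Ω → List Ω → List Ω → A) (ω : List Ω) :
    decon (fun r s => decon (fun p q => H p q s) r) ω =
      decon (fun p t => decon (fun q s => H p q s) t) ω := by
  induction ω generalizing H with
  | nil => simp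
  | cons a ω ih => simp only [decon_cons, decon_nil, decon_add, ih, add_assoc]

lemma deconPos_assoc (H : List Ω → List Ω → List Ω → A) (ω : List Ω) :
    deconPos (fun r s => deconPos (fun p q => H p q s) r) ω =
      deconPos (fun p t => decon (fun q s => H p q s) t) ω := by
  cases ω with
  | nil => simp
  | cons a ω => simp only [deconPos_cons]; exact decon_assoc _ ω

end Deconcatenation

section Shuffle

variable {Ω A : Type*} [CommRing A]

/-- The list, with multiplicities, of all shuffles of two words. -/
def shuffles : List Ω → List Ω → List (List Ω)
  | [], β => [β]
  | a :: α, [] => [a :: α]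
  | a :: α, b :: β =>
      (shuffles α (b :: β)).map (List.cons a) ++ (shuffles (a :: α) β).map (List.cons b)

/-- Sum of the values of a mould over all shuffles of two words. -/
def shufSum (M : List Ω → A) (α β : List Ω) : A := ((shuffles α β).map M).sum

lemma shuffles_nil_right (α : List Ω) : shuffles α [] = [α] := by
  cases α <;> simp [shuffles]

lemma perm_of_mem_shuffles {α β ω : List Ω} (h : ω ∈ shuffles α β) : ω.Perm (α ++ β) := by
  induction α, β using shuffles.induct generalizing ω with
  | case1 β => simp_all [shuffles]
  | case2 a α => simp_all [shuffles]
  | case3 a α b β ih₁ ih₂ =>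
    simp only [shuffles, List.mem_append, List.mem_map] at h
    rcases h with ⟨w, hw, rfl⟩ | ⟨w, hw, rfl⟩
    · exact (ih₁ hw).cons a
    · exact ((ih₂ hw).cons b).trans List.perm_middle.symm

lemma count_map_cons [BEq (List Ω)] [LawfulBEq (List Ω)] (a c : Ω) (ω : List Ω)
    (L : List (List Ω)) :
    (L.map (List.cons a)).count (c :: ω) = if a = c then L.count ω else 0 := by
  split_ifs with h
  · subst h
    exact List.count_map_of_injective _ _ List.cons_injective _
  · rw [List.count_eq_zero]
    simp [h]

lemma sh_nil_left [BEq (List Ω)] [LawfulBEq (List Ω)] (β ω : List Ω) :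
    sh [] β ω = [β].count ω := by
  induction β generalizing ω with
  | nil => cases ω <;> simp [sh]
  | cons b β ih =>
    cases ω with
    | nil => simp [sh]
    | cons c ω => rw [sh, ih, ← count_map_cons]; rfl

lemma sh_nil_right [BEq (List Ω)] [LawfulBEq (List Ω)] (α ω : List Ω) :
    sh α [] ω = [α].count ω := by
  induction α generalizing ω with
  | nil => exact sh_nil_left [] ω
  | cons b β ih =>
    cases ω with
    | nil => simp [sh]
    | cons c ω => rw [sh, ih, ← count_map_cons]; rfl

lemma count_shuffles [BEq (List Ω)] [LawfulBEq (List Ω)] (α β ω : List Ω) :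
    (shuffles α β).count ω = sh α β ω := by
  induction α, β using shuffles.induct generalizing ω with
  | case1 β => rw [shuffles, sh_nil_left]
  | case2 a α => rw [shuffles, sh_nil_right]
  | case3 a α b β ih₁ ih₂ =>
    cases ω with
    | nil => simp [shuffles, sh, List.count_eq_zero]
    | cons c ω =>
      simp only [shuffles, List.count_append, count_map_cons, sh, ih₁, ih₂]

lemma shSum_eq_shufSum (M : List Ω → A) (α β : List Ω) : shSum M α β = shufSum M α β := by
  rw [shufSum, Finset.sum_list_map_count, shSum]
  simp only [count_shuffles]
  refine (Finset.sum_subset (fun ω hω => ?_) fun ω _ hω => ?_).symm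
  · simpa using perm_of_mem_shuffles (List.mem_toFinset.1 hω)
  · rw [List.mem_toFinset, ← List.count_eq_zero, count_shuffles] at hω
    simp [hω]

@[simp] lemma shufSum_nil_left (M : List Ω → A) (β : List Ω) : shufSum M [] β = M β := by
  simp [shufSum, shuffles]

@[simp] lemma shufSum_nil_right (M : List Ω → A) (α : List Ω) : shufSum M α [] = M α := by
  simp [shufSum, shuffles_nil_right]

lemma shufSum_cons_cons (M : List Ω → A) (a b : Ω) (α β : List Ω) :
    shufSum M (a :: α) (b :: β) =
      shufSum (fun w => M (a :: w)) α (b :: β) + shufSum (fun w => M (b :: w)) (a :: α) β := by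
  simp [shufSum, shuffles, Function.comp_def]

lemma shufSum_add (M N : List Ω → A) (α β : List Ω) :
    shufSum (fun w => M w + N w) α β = shufSum M α β + shufSum N α β :=
  List.sum_map_add

lemma shufSum_mul_left (c : A) (M : List Ω → A) (α β : List Ω) :
    shufSum (fun w => c * M w) α β = c * shufSum M α β :=
  List.sum_map_mul_left ..

lemma shufSum_mul_right (M : List Ω → A) (c : A) (α β : List Ω) :
    shufSum (fun w => M w * c) α β = shufSum M α β * c :=
  List.sum_map_mul_right ..

lemma shufSum_congr {M N : List Ω → A} {α β : List Ω}
    (h : ∀ w, w.Perm (α ++ β) → M w = N w) : shufSum M α β = shufSum N α β := by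
  unfold shufSum
  rw [List.map_congr_left fun w hw => h w (perm_of_mem_shuffles hw)]

/-- Deconcatenation is compatible with shuffling. -/
lemma shufSum_decon (F : List Ω → List Ω → A) (α β : List Ω) :
    shufSum (decon F) α β =
      decon (fun α₁ α₂ => decon (fun β₁ β₂ =>
        shufSum (fun p => shufSum (F p) α₂ β₂) α₁ β₁) β) α := by
  induction α, β using shuffles.induct generalizing F with
  | case1 β => simp
  | case2 a α => simp
  | case3 a α b β ih₁ ih₂ =>
    rw [shufSum_cons_cons]
    simp only [decon_cons F, shufSum_add, ih₁, ih₂]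
    simp only [decon_cons, decon_add, shufSum_nil_left, shufSum_nil_right, shufSum_cons_cons]
    ring

lemma isAlternal_iff (M : List Ω → A) :
    IsAlternal M ↔ M [] = 0 ∧ ∀ α β : List Ω, α ≠ [] → β ≠ [] → shufSum M α β = 0 := by
  simp only [IsAlternal, shSum_eq_shufSum]

lemma isSymmetral_iff (M : List Ω → A) :
    IsSymmetral M ↔
      M [] = 1 ∧ ∀ α β : List Ω, α ≠ [] → β ≠ [] → shufSum M α β = M α * M β := by
  simp only [IsSymmetral, shSum_eq_shufSum]

lemma isAlternal_idMould : IsAlternal (idMould : List Ω → A) := by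
  refine (isAlternal_iff _).2 ⟨rfl, fun α β hα hβ => ?_⟩
  rw [shufSum_congr (N := fun _ => 0 * 0), shufSum_mul_left, zero_mul]
  intro w hw
  have hlen := hw.length_eq
  rw [List.length_append] at hlen
  have := List.length_pos_iff.2 hα
  have := List.length_pos_iff.2 hβ
  match w with
  | [] => simp [idMould]
  | [_] => simp at hlen; omega
  | _ :: _ :: _ => simp [idMould]

end Shuffle

section Composition

variable {Ω A : Type*} [CommRing A]

lemma sum_composition_succ {n : ℕ} {m : ℕ → ℕ} (hm : ∀ i, m i = n - i) (f : List ℕ → A) :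
    ∑ c : Composition (n + 1), f c.blocks =
      ∑ i ∈ Finset.range (n + 1), ∑ c : Composition (m i), f ((i + 1) :: c.blocks) := by
  rw [Finset.sum_sigma']
  symm
  refine Finset.sum_bij (fun x hx => ⟨(x.1 + 1) :: x.2.blocks, ?_, ?_⟩) ?_ ?_ ?_ ?_
  · intro k hk
    rcases List.mem_cons.1 hk with rfl | hk
    · omega
    · exact x.2.blocks_pos hk
  · have := Finset.mem_range.1 (Finset.mem_sigma.1 hx).1
    rw [List.sum_cons, x.2.blocks_sum, hm]
    omega
  · simp
  · rintro ⟨i, c⟩ _ ⟨j, d⟩ _ h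
    simp only [Composition.mk.injEq, List.cons.injEq, Nat.add_right_cancel_iff] at h
    obtain ⟨rfl, h⟩ := h
    rw [Composition.ext h]
  · rintro ⟨_ | ⟨k, ns⟩, hpos, hsum⟩ _
    · simp at hsum
    · have hk : 0 < k := hpos (by simp)
      rw [List.sum_cons] at hsum
      refine ⟨⟨k - 1, ⟨ns, fun h => hpos (by simp [h]), by rw [hm]; omega⟩⟩, by simp; omega, ?_⟩
      simp [Nat.sub_add_cancel hk]
  · intros
    rfl

lemma splitWrtComposition_ones (ω : List Ω) :
    ω.splitWrtComposition (Composition.ones ω.length) = ω.map fun a => [a] := by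
  rw [List.splitWrtComposition, Composition.ones_blocks]
  induction ω with
  | nil => rfl
  | cons a l ih => simpa [List.replicate_succ, List.splitWrtCompositionAux_cons] using ih

variable [AddCommSemigroup Ω] [Nonempty Ω]

@[simp] lemma mcomp_nil (M U : List Ω → A) : mcomp M U [] = M [] := by
  have h (c : Composition ([] : List Ω).length) :
      ([] : List Ω).splitWrtComposition c = [] := by
    rw [← List.length_eq_zero_iff, List.length_splitWrtComposition]
    exact c.length_eq_zero.2 rfl
  simp only [mcomp, h]
  simp [composition_card]

lemma mcomp_eq_deconPos (M U : List Ω → A) {ω : List Ω} (hω : ω ≠ []) :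
    mcomp M U ω = deconPos (fun p q => U p * mcomp (fun x => M (wsum p :: x)) U q) ω := by
  obtain ⟨a, l, rfl⟩ := List.exists_cons_of_ne_nil hω
  refine (sum_composition_succ (n := l.length) (m := fun i => (l.drop i).length) (by simp) fun b =>
    M (((a :: l).splitWrtCompositionAux b).map wsum) *
      (((a :: l).splitWrtCompositionAux b).map U).prod).trans ?_
  refine Finset.sum_congr rfl fun i _ => ?_
  simp only [mcomp, List.drop_succ_cons, List.splitWrtCompositionAux_cons, Finset.mul_sum,
    List.map_cons, List.prod_cons, List.splitWrtComposition]
  exact Finset.sum_congr rfl fun c _ => by ring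

lemma mcomp_add (M N U : List Ω → A) (ω : List Ω) :
    mcomp (fun x => M x + N x) U ω = mcomp M U ω + mcomp N U ω := by
  simp only [mcomp, add_mul, Finset.sum_add_distrib]

lemma mcomp_mul_left (c : A) (M U : List Ω → A) (ω : List Ω) :
    mcomp (fun x => c * M x) U ω = c * mcomp M U ω := by
  simp only [mcomp, mul_assoc, Finset.mul_sum]

lemma mcomp_mul_right (M : List Ω → A) (c : A) (U : List Ω → A) (ω : List Ω) :
    mcomp (fun x => M x * c) U ω = mcomp M U ω * c := by
  simp only [mul_comm _ c, mcomp_mul_left]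

lemma mcomp_zero (U : List Ω → A) (ω : List Ω) : mcomp (fun _ => 0) U ω = 0 := by
  simp [mcomp]

lemma mcomp_deconPos (F : List Ω → List Ω → List Ω → A) (U : List Ω → A) (α β : List Ω) :
    mcomp (fun x => deconPos (F x) β) U α =
      deconPos (fun p q => mcomp (fun x => F x p q) U α) β := by
  simp only [mcomp, deconPos, Finset.sum_mul]
  exact Finset.sum_comm

lemma wsum_perm {v w : List Ω} (h : v.Perm w) : wsum v = wsum w := by
  induction h with
  | nil => rfl
  | cons a h _ => exact h.foldl_eq (rcomm := ⟨fun _ _ _ => add_right_comm _ _ _⟩) _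
  | swap a b l => simp [wsum, add_comm]
  | trans _ _ h₁ h₂ => exact h₁.trans h₂

lemma wsum_append {v w : List Ω} (hv : v ≠ []) : wsum (v ++ w) = wsum (wsum v :: w) := by
  obtain ⟨a, l, rfl⟩ := List.exists_cons_of_ne_nil hv
  simp [wsum]

lemma wsum_cons_wsum (a : Ω) {w : List Ω} (hw : w ≠ []) :
    wsum (a :: w) = wsum [a, wsum w] := by
  change wsum ([a] ++ w) = _
  rw [wsum_perm (List.perm_append_comm (l₁ := [a]) (l₂ := w)), wsum_append hw]
  exact add_comm _ _

/-- `mcomp M U ω` depends only on the values of `M` on words with the same weight as `ω`. -/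
lemma mcomp_congr {M N U : List Ω → A} {ω : List Ω} (hω : ω ≠ [])
    (h : ∀ x, x ≠ [] → wsum x = wsum ω → M x = N x) : mcomp M U ω = mcomp N U ω := by
  induction hn : ω.length using Nat.strong_induction_on generalizing ω M N with
  | _ n ih =>
    rw [mcomp_eq_deconPos _ _ hω, mcomp_eq_deconPos _ _ hω]
    refine deconPos_congr fun p q hp hpq => ?_
    congr 1
    rcases eq_or_ne q [] with rfl | hq
    · rw [mcomp_nil, mcomp_nil]
      refine h _ (by simp) ?_
      rw [← hpq, List.append_nil]
      rfl
    · have := List.length_pos_iff.2 hp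
      refine ih q.length (by rw [← hn, ← hpq, List.length_append]; omega) hq
        (fun x hx hxq => h _ (by simp) ?_) rfl
      rw [wsum_cons_wsum _ hx, hxq, ← wsum_cons_wsum _ hq, ← hpq, wsum_append hp]

lemma mcomp_decon (G : List Ω → List Ω → A) (U : List Ω → A) (ω : List Ω) :
    mcomp (decon G) U ω =
      decon (fun p q => mcomp (fun x => mcomp (G x) U q) U p) ω := by
  induction hn : ω.length using Nat.strong_induction_on generalizing ω G with
  | _ n ih =>
    rcases eq_or_ne ω [] with rfl | hω
    · simp
    rw [mcomp_eq_deconPos _ _ hω, decon_eq, mcomp_nil, mcomp_eq_deconPos (G []) _ hω]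
    have expand : deconPos (fun r s => mcomp (fun x => mcomp (G x) U s) U r) ω =
        deconPos (fun r s => deconPos (fun p q =>
          U p * mcomp (fun x => mcomp (G (wsum p :: x)) U s) U q) r) ω :=
      deconPos_congr fun r s hr _ => mcomp_eq_deconPos _ _ hr
    rw [expand, deconPos_assoc fun p q s => U p * mcomp (fun x => mcomp (G (wsum p :: x)) U s) U q,
      ← deconPos_add]
    refine deconPos_congr fun p q hp hpq => ?_
    have := List.length_pos_iff.2 hp
    simp only [decon_cons, mcomp_add, mul_add]
    rw [ih q.length (by rw [← hn, ← hpq, List.length_append]; omega) _ _ rfl]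
    simp only [decon, Finset.mul_sum]

lemma mcomp_assoc (M U V : List Ω → A) : mcomp (mcomp M U) V = mcomp M (mcomp U V) := by
  funext ω
  induction hn : ω.length using Nat.strong_induction_on generalizing ω M with
  | _ n ih =>
    rcases eq_or_ne ω [] with rfl | hω
    · simp
    let F : List Ω → List Ω → A := fun p q =>
      if p = [] then 0 else U p * mcomp (fun x => M (wsum p :: x)) U q
    have hF {x : List Ω} (hx : x ≠ []) : mcomp M U x = decon F x := by
      rw [mcomp_eq_deconPos _ _ hx, decon_eq, show F [] x = 0 from if_pos rfl, zero_add]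
      exact deconPos_congr fun p q hp _ => (if_neg hp).symm
    rw [mcomp_congr hω fun x hx _ => hF hx, mcomp_decon, decon_eq, mcomp_nil,
      show F [] = fun _ => 0 from funext fun _ => if_pos rfl, mcomp_zero, zero_add,
      mcomp_eq_deconPos _ _ hω]
    refine deconPos_congr fun p q hp hpq => ?_
    have := List.length_pos_iff.2 hp
    rw [← ih q.length (by rw [← hn, ← hpq, List.length_append]; omega) _ _ rfl, ← mcomp_mul_right]
    refine mcomp_congr hp fun x hx hxp => ?_
    simp only [F, if_neg hx, mcomp_mul_left, hxp]

lemma idMould_mcomp {U : List Ω → A} (hU : U [] = 0) : mcomp idMould U = U := by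
  funext ω
  rcases eq_or_ne ω [] with rfl | hω
  · rw [mcomp_nil, hU]
    rfl
  have hq (a : Ω) {q : List Ω} (hq : q ≠ []) :
      mcomp (fun x => (idMould (a :: x) : A)) U q = 0 := by
    rw [mcomp_congr (N := fun _ => 0) hq, mcomp_zero]
    rintro (_ | ⟨b, x⟩) hx _
    · exact absurd rfl hx
    · rfl
  have hlen := List.length_pos_iff.2 hω
  rw [mcomp_eq_deconPos _ _ hω, deconPos, Finset.sum_eq_single (ω.length - 1)]
  · simp [Nat.sub_add_cancel hlen, idMould]
  · intro i hi hne
    rw [Finset.mem_range] at hi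
    rw [hq, mul_zero]
    rw [← List.length_pos_iff, List.length_drop]
    omega
  · simp [hω]

lemma mcomp_idMould (M : List Ω → A) : mcomp M idMould = M := by
  funext ω
  induction ω generalizing M with
  | nil => simp
  | cons a l ih =>
    rw [mcomp_eq_deconPos _ _ (by simp), deconPos_cons, decon_eq, ih,
      deconPos_congr (G := fun _ _ => 0 * 0), deconPos_mul_left]
    · simp [idMould, wsum]
    · rintro (_ | ⟨b, p⟩) q hp _
      · exact absurd rfl hp
      · simp [idMould]

/-- Shuffle sums of `M ∘ U`, for `U` alternal, are obtained by composing with `U` in both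
arguments of the shuffle sums of `M`. -/
lemma shufSum_mcomp {U : List Ω → A} (hU : IsAlternal U) (M : List Ω → A) (α β : List Ω) :
    shufSum (mcomp M U) α β =
      mcomp (fun x => mcomp (fun y => shufSum M x y) U β) U α := by
  obtain ⟨hU₀, hU⟩ := (isAlternal_iff U).1 hU
  induction hn : α.length + β.length using Nat.strong_induction_on generalizing α β M with
  | _ n ih =>
    rcases eq_or_ne α [] with rfl | hα
    · simp
    rcases eq_or_ne β [] with rfl | hβ
    · simp
    have hF {x : List Ω} (hx : x ≠ []) : mcomp M U x =
        decon (fun p q => U p * mcomp (fun w => M (wsum p :: w)) U q) x := by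
      rw [mcomp_eq_deconPos _ _ hx, decon_eq, hU₀, zero_mul, zero_add]
    have factor (α₁ α₂ β₁ β₂ : List Ω) :
        shufSum (fun p => shufSum (fun q => U p * mcomp (fun w => M (wsum p :: w)) U q) α₂ β₂)
            α₁ β₁ =
          shufSum U α₁ β₁ *
            shufSum (mcomp (fun w => M (wsum (α₁ ++ β₁) :: w)) U) α₂ β₂ := by
      rw [← shufSum_mul_right]
      refine shufSum_congr fun p hp => ?_
      rw [shufSum_mul_left, wsum_perm hp]
    have lhs : shufSum (mcomp M U) α β =
        deconPos (fun p q => U p *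
          mcomp (fun x => mcomp (fun y => shufSum (fun w => M (wsum p :: w)) x y) U q) U α) β +
        deconPos (fun p q => U p *
          mcomp (fun x => mcomp (fun y => shufSum (fun w => M (wsum p :: w)) x y) U β) U q) α := by
      have hne {w : List Ω} (hw : w.Perm (α ++ β)) : w ≠ [] := by
        rintro rfl
        simp [hα] at hw
      rw [shufSum_congr fun w hw => hF (hne hw), shufSum_decon]
      simp only [factor]
      rw [decon_eq, decon_eq]
      simp only [shufSum_nil_left, List.nil_append, hU₀, zero_mul, zero_add]
      congr 1
      · refine deconPos_congr fun p q hp hpq => ?_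
        have := List.length_pos_iff.2 hp
        rw [ih (α.length + q.length)
          (by rw [← hn, ← hpq, List.length_append]; omega) _ _ _ rfl]
      · refine deconPos_congr fun p q hp hpq => ?_
        have := List.length_pos_iff.2 hp
        rw [decon_eq, shufSum_nil_right, List.append_nil, ih (q.length + β.length)
          (by rw [← hn, ← hpq, List.length_append]; omega) _ _ _ rfl,
          deconPos_congr (G := fun _ _ => 0 * 0), deconPos_mul_left, zero_mul, add_zero]
        intro r s hr _
        rw [hU p r hp hr, zero_mul, zero_mul]
    have inner (a : Ω) (x : List Ω) : mcomp (fun y => shufSum M (a :: x) y) U β =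
        mcomp (fun y => shufSum (fun w => M (a :: w)) x y) U β +
        deconPos (fun p q => U p *
          mcomp (fun y => shufSum (fun w => M (wsum p :: w)) (a :: x) y) U q) β := by
      rw [mcomp_eq_deconPos _ _ hβ,
        mcomp_eq_deconPos (fun y => shufSum (fun w => M (a :: w)) x y) _ hβ, ← deconPos_add]
      simp only [shufSum_cons_cons, mcomp_add, mul_add]
    rw [lhs, mcomp_eq_deconPos _ _ hα]
    simp only [inner, mcomp_add, mul_add, deconPos_add, mcomp_deconPos, mcomp_mul_left]
    rw [add_comm]
    congr 1
    simp only [← deconPos_mul_left]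
    rw [deconPos_comm]
    refine deconPos_congr fun p q _ _ => ?_
    rw [mcomp_eq_deconPos _ _ hα, ← deconPos_mul_left]
    simp only [mul_left_comm]

lemma isAlternal_mcomp {M U : List Ω → A} (hM : IsAlternal M) (hU : IsAlternal U) :
    IsAlternal (mcomp M U) := by
  obtain ⟨hM₀, hM⟩ := (isAlternal_iff M).1 hM
  refine (isAlternal_iff _).2 ⟨by rw [mcomp_nil, hM₀], fun α β hα hβ => ?_⟩
  rw [shufSum_mcomp hU, mcomp_congr (N := fun _ => 0) hα, mcomp_zero]
  intro x hx _
  rw [mcomp_congr (N := fun _ => 0) hβ, mcomp_zero]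
  exact fun y hy _ => hM x y hx hy

lemma isSymmetral_mcomp {M U : List Ω → A} (hM : IsSymmetral M) (hU : IsAlternal U) :
    IsSymmetral (mcomp M U) := by
  obtain ⟨hM₀, hM⟩ := (isSymmetral_iff M).1 hM
  refine (isSymmetral_iff _).2 ⟨by rw [mcomp_nil, hM₀], fun α β hα hβ => ?_⟩
  rw [shufSum_mcomp hU, ← mcomp_mul_right]
  refine mcomp_congr hα fun x hx _ => ?_
  rw [← mcomp_mul_left]
  exact mcomp_congr hβ fun y hy _ => hM x y hx hy

/-- The solution `M` of `M ∘ U = N`, computed by induction on the length of words. -/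
noncomputable def mdiv (N U : List Ω → A) (ω : List Ω) : A :=
  Ring.inverse (ω.map fun a => U [a]).prod *
    (N ω - ∑ c : Composition ω.length,
      if c.length < ω.length then
        mdiv N U ((ω.splitWrtComposition c).map wsum) * ((ω.splitWrtComposition c).map U).prod
      else 0)
termination_by ω.length
decreasing_by simpa

lemma mcomp_mdiv (N : List Ω → A) {U : List Ω → A} (hU : ∀ a, IsUnit (U [a])) :
    mcomp (mdiv N U) U = N := by
  funext ω
  have hunit : IsUnit (ω.map fun a => U [a]).prod := by
    induction ω with
    | nil => simp
    | cons a l ih => simpa using (hU a).mul ih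
  have hlt (c : Composition ω.length) : c.length < ω.length ↔ c ≠ Composition.ones _ := by
    rw [ne_eq, Composition.eq_ones_iff_le_length, not_le]
  have hones : mdiv N U ((ω.splitWrtComposition (Composition.ones ω.length)).map wsum) *
      ((ω.splitWrtComposition (Composition.ones ω.length)).map U).prod =
        N ω - ∑ c ∈ {Composition.ones ω.length}ᶜ,
          mdiv N U ((ω.splitWrtComposition c).map wsum) *
            ((ω.splitWrtComposition c).map U).prod := by
    have h₁ : (ω.map fun a => [a]).map wsum = ω := by simp [Function.comp_def, wsum]
    have h₂ : (ω.map fun a => [a]).map U = ω.map fun a => U [a] := by simp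
    rw [splitWrtComposition_ones, h₁, h₂, mdiv, mul_comm, Ring.mul_inverse_cancel_left _ _ hunit,
      ← Finset.sum_filter]
    congr 2
    ext c
    simp [hlt]
  rw [mcomp, Fintype.sum_eq_add_sum_compl (Composition.ones ω.length), hones, sub_add_cancel]

lemma exists_mcomp_inverse {U : List Ω → A} (hU₀ : U [] = 0) (hU : ∀ a, IsUnit (U [a])) :
    ∃ V : List Ω → A, mcomp U V = idMould ∧ mcomp V U = idMould := by
  let V : List Ω → A := mdiv idMould U
  have hVU : mcomp V U = idMould := mcomp_mdiv idMould hU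
  have hVunit (a : Ω) : IsUnit (V [a]) := by
    have h := congrFun hVU [a]
    rw [mcomp_eq_deconPos _ _ (by simp)] at h
    simp only [deconPos_cons, decon_nil, mcomp_nil] at h
    exact IsUnit.of_mul_eq_one_right _ h
  have hWV : mcomp (mdiv idMould V) V = idMould := mcomp_mdiv idMould hVunit
  have hUW : mdiv idMould V = U := by
    rw [← idMould_mcomp hU₀, ← hWV, mcomp_assoc, hVU, mcomp_idMould, hWV]
  exact ⟨V, hUW ▸ hWV, hVU⟩

lemma isAlternal_of_mcomp_eq_idMould {U V : List Ω → A} (hU : IsAlternal U)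
    (hUV : mcomp U V = idMould) (hVU : mcomp V U = idMould) : IsAlternal V := by
  have inj (f : List Ω → A) (hf : ∀ α, α ≠ [] → mcomp f U α = 0) (x : List Ω) (hx : x ≠ []) :
      f x = 0 := by
    rw [← mcomp_idMould f, ← hUV, ← mcomp_assoc, mcomp_congr (N := fun _ => 0) hx, mcomp_zero]
    exact fun y hy _ => hf y hy
  refine (isAlternal_iff V).2 ⟨?_, fun x y hx hy => ?_⟩
  · rw [← mcomp_nil V U, hVU]
    rfl
  · refine inj (fun y => shufSum V x y) (fun β hβ => ?_) y hy
    refine inj (fun x => mcomp (fun y => shufSum V x y) U β) (fun α hα => ?_) x hx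
    rw [← shufSum_mcomp hU, hVU]
    exact ((isAlternal_iff _).1 isAlternal_idMould).2 α β hα hβ

end Composition

end Mould

theorem stmt_11 {Ω A : Type*} [AddCommSemigroup Ω] [Nonempty Ω] [CommRing A] [Algebra ℂ A]
    (U : List Ω → A) (hU : IsAlternal U) :
    (∀ M : List Ω → A, IsAlternal M → IsAlternal (mcomp M U)) ∧
    (∀ M : List Ω → A, IsSymmetral M → IsSymmetral (mcomp M U)) ∧
    ((∀ w : Ω, IsUnit (U [w])) →
      ∃ V : List Ω → A, mcomp U V = idMould ∧ mcomp V U = idMould ∧ IsAlternal V) := by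
  exact ⟨fun _ hM => Mould.isAlternal_mcomp hM hU, fun _ hM => Mould.isSymmetral_mcomp hM hU,
    fun hunit =>
      have ⟨V, hUV, hVU⟩ := Mould.exists_mcomp_inverse hU.1 hunit
      ⟨V, hUV, hVU, Mould.isAlternal_of_mcomp_eq_idMould hU hUV hVU⟩⟩
end

section
/- Let ξ be the A-linear map from dimoulds to moulds defined by ξ(𝐌)^ω = Σ_{ω = α·β} (−1)^{r(α)} 𝐌^{(α̃,β)}, where α̃ denotes the reversal of the word α. Then for any two moulds M, N one has ξ(M ⊗ N) = (S M) × N, and ξ(τ(M)) = M^∅ · 1^•. -/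
/-! Statement 14: the map ξ from dimoulds to moulds satisfies ξ(M ⊗ N) = (S M) × N and ξ(τ(M)) = M^∅ · 1^•. -/

open scoped Classical

/-- `(S M)^{ω₁,…,ω_r} = (−1)^r M^{ω_r,…,ω₁}`. -/
def Smap {Ω A : Type*} [CommRing A] (M : List Ω → A) : List Ω → A := fun ω =>
  (-1 : A) ^ ω.length * M ω.reverse

/-- The map `ξ`, `ξ(MM)^ω = Σ_{ω = α·β} (−1)^{r(α)} MM^{(α̃,β)}` with `α̃` the reversal of `α`. -/
noncomputable def xi {Ω A : Type*} [CommRing A] (MM : List Ω → List Ω → A) : List Ω → A :=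
  fun ω => ∑ i ∈ Finset.range (ω.length + 1),
    (-1 : A) ^ i * MM ((ω.take i).reverse) (ω.drop i)

/-- The contribution to `sh (ω.take i).reverse (ω.drop i) (c :: w)` of the shuffles whose first
letter comes from `(ω.take i).reverse`; equally, for `i = j + 1`, the contribution to
`sh (ω.take j).reverse (ω.drop j) (c :: w)` of those whose first letter comes from `ω.drop j`. -/
noncomputable def splitTerm {Ω : Type*} (ω : List Ω) (c : Ω) (w : List Ω) : ℕ → ℕ
  | 0 => 0
  | i + 1 => if ω[i]? = some c then sh (ω.take i).reverse (ω.drop (i + 1)) w else 0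

theorem sh_cons_right {Ω : Type*} (α β : List Ω) (c : Ω) (w : List Ω) :
    sh α β (c :: w) = (if α.head? = some c then sh α.tail β w else 0) +
      (if β.head? = some c then sh α β.tail w else 0) := by
  cases α <;> cases β <;> simp [sh]

theorem sh_reverse_take_drop_cons {Ω : Type*} (ω : List Ω) (c : Ω) (w : List Ω) {i : ℕ}
    (hi : i ≤ ω.length) :
    sh (ω.take i).reverse (ω.drop i) (c :: w) = splitTerm ω c w i + splitTerm ω c w (i + 1) := by
  rw [sh_cons_right]
  congr 1
  · cases i with
    | zero => simp [splitTerm]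
    | succ j =>
      have hj : j < ω.length := hi
      have hrev : (ω.take (j + 1)).reverse = ω[j] :: (ω.take j).reverse := by
        rw [List.take_add_one, List.getElem?_eq_getElem hj, Option.toList_some,
          List.reverse_append, List.reverse_singleton, List.singleton_append]
      simp only [hrev, splitTerm, List.getElem?_eq_getElem hj, List.head?_cons, List.tail_cons]
  · simp [splitTerm]

theorem sum_neg_one_pow_mul_add_succ {A : Type*} [CommRing A] (p : ℕ → A) (n : ℕ) :
    ∑ i ∈ Finset.range n, (-1 : A) ^ i * (p i + p (i + 1)) = p 0 - (-1) ^ n * p n := by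
  induction n with
  | zero => simp
  | succ n ih => rw [Finset.sum_range_succ, ih]; ring

theorem sum_neg_one_pow_mul_sh {Ω A : Type*} [CommRing A] {ω : List Ω} (hω : ω ≠ [])
    (w : List Ω) :
    ∑ i ∈ Finset.range (ω.length + 1),
      (-1 : A) ^ i * (sh (ω.take i).reverse (ω.drop i) w : A) = 0 := by
  cases w with
  | nil =>
    refine Finset.sum_eq_zero fun i _ => ?_
    have h : (ω.take i).reverse ≠ [] ∨ ω.drop i ≠ [] := by
      by_contra! h
      apply hω
      rw [← List.take_append_drop i ω, h.2, List.reverse_eq_nil_iff.mp h.1, List.append_nil]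
    generalize (ω.take i).reverse = α at h
    generalize ω.drop i = β at h
    cases α <;> cases β <;> simp_all [sh]
  | cons c w =>
    calc _ = ∑ i ∈ Finset.range (ω.length + 1),
          (-1 : A) ^ i * ((splitTerm ω c w i : A) + (splitTerm ω c w (i + 1) : A)) := by
          refine Finset.sum_congr rfl fun i hi => ?_
          rw [sh_reverse_take_drop_cons ω c w (Finset.mem_range_succ_iff.mp hi), Nat.cast_add]
      _ = 0 := by
          rw [sum_neg_one_pow_mul_add_succ (fun i => (splitTerm ω c w i : A))]
          simp [splitTerm]

theorem shSum_eq_sum_permutations {Ω A : Type*} [CommRing A] (M : List Ω → A)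
    {α β ω : List Ω} (h : (α ++ β).Perm ω) :
    shSum M α β = ∑ w ∈ ω.permutations.toFinset, (sh α β w : A) * M w := by
  have hP : (α ++ β).permutations.toFinset = ω.permutations.toFinset := by
    ext w
    simp only [List.mem_toFinset, List.mem_permutations]
    exact ⟨fun hw => hw.trans h, fun hw => hw.trans h.symm⟩
  simp only [shSum, hP, nsmul_eq_mul]

theorem xi_tau_of_ne_nil {Ω A : Type*} [CommRing A] (M : List Ω → A) {ω : List Ω}
    (hω : ω ≠ []) : xi (tau M) ω = 0 := by
  have hperm (i : ℕ) : ((ω.take i).reverse ++ ω.drop i).Perm ω := by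
    simpa using (List.reverse_perm (ω.take i)).append_right (ω.drop i)
  simp only [xi, tau, fun i => shSum_eq_sum_permutations M (hperm i), Finset.mul_sum]
  rw [Finset.sum_comm]
  refine Finset.sum_eq_zero fun w _ => ?_
  simp only [← mul_assoc, ← Finset.sum_mul, sum_neg_one_pow_mul_sh hω, zero_mul]

theorem stmt_14 {Ω A : Type*} [Nonempty Ω] [CommRing A] [Algebra ℂ A] :
    (∀ M N : List Ω → A, xi (fun α β => M α * N β) = mmul (Smap M) N) ∧
    (∀ M : List Ω → A, xi (tau M) = fun ω => M [] * munit ω) := by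
  refine ⟨fun M N => funext fun ω => Finset.sum_congr rfl fun i hi => ?_,
    fun M => funext fun ω => ?_⟩
  · have hlen : (ω.take i).length = i :=
      List.length_take_of_le (Finset.mem_range_succ_iff.mp hi)
    simp only [Smap, hlen, mul_assoc]
  · cases ω with
    | nil => simp [xi, tau, shSum, sh, munit]
    | cons a ω => simp [xi_tau_of_ne_nil, munit]
end
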